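/- Every unary polynomial F of K with F({q⁰,q¹,q²}) ⊆ {q⁰,q¹,q²} is order-preserving on {q⁰,q¹,q²} with respect to the componentwise order (where B(T) is ordered by x ≤ y iff x=0, or x=y, or (x=P₂ and y∈{P₀,P₁})). (Lemma 4.2(4).) -/

import Mathlib

namespace Paper

/-- Direction of a Turing-machine head move. -/
inductive Dir : Type
  | L | R
deriving DecidableEq

/-- A Turing machine with states μ₀, μ₁, …, μ_k (μ₀ the halting state): for each state
μ_i with 1 ≤ i ≤ k and each tape symbol r, exactly one instruction μ_i r s D μ_m,
recorded as `instr i r = (s, D, m)`.  (The value of `instr` at `i = 0` is irrelevant: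
no instruction begins with μ₀.) -/
structure TM (k : ℕ) : Type where
  instr : Fin (k + 1) → Bool → Bool × Dir × Fin (k + 1)

/-- The universe of the algebra B(T):
`zero` = 0, `P j` = P_j, `one`,`two`,`H` the sequential elements U, and the machine
elements `C b i r s` = C_{ir}^s, `D b i r s` = D_{ir}^s, `M b i r` = M_i^r, where
`b = true` marks the barred copy V̄. -/
inductive BT (k : ℕ) : Type
  | zero : BT k
  | P : Fin 3 → BT k
  | one : BT k
  | two : BT k
  | H : BT k
  | C : Bool → Fin (k + 1) → Bool → Bool → BT k
  | D : Bool → Fin (k + 1) → Bool → Bool → BT k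
  | M : Bool → Fin (k + 1) → Bool → BT k
deriving DecidableEq

namespace BT

variable {k : ℕ}

/-- The partial order of B(T): x ≤ y iff x = 0, or x = y, or (x = P₂ and y ∈ {P₀,P₁}). -/
def le (x y : BT k) : Prop :=
  x = zero ∨ x = y ∨ (x = P 2 ∧ (y = P 0 ∨ y = P 1))

/-- x ∧ y: the greatest lower bound for `le`. -/
def meet (x y : BT k) : BT k :=
  if x = y then x
  else if x = P 2 ∧ (y = P 0 ∨ y = P 1) then P 2
  else if y = P 2 ∧ (x = P 0 ∨ x = P 1) then P 2
  else if (x = P 0 ∨ x = P 1) ∧ (y = P 0 ∨ y = P 1) then P 2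
  else zero

/-- membership in P = {P₀,P₁,P₂} -/
def isP : BT k → Bool
  | P _ => true
  | _ => false

/-- membership in U = {1,2,H} -/
def isU : BT k → Bool
  | one => true
  | two => true
  | H => true
  | _ => false

/-- membership in V ∪ V̄ -/
def isVV : BT k → Bool
  | C _ _ _ _ => true
  | D _ _ _ _ => true
  | M _ _ _ => true
  | _ => false

/-- membership in U ∪ V ∪ V̄ -/
def isUVV (x : BT k) : Bool := isU x || isVV x

/-- membership in V₀ = {C_{0r}^s, D_{0r}^s, M₀^r} (unbarred, state μ₀) -/
def isV0 : BT k → Bool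
  | C false i _ _ => i == 0
  | D false i _ _ => i == 0
  | M false i _ => i == 0
  | _ => false

/-- membership in V₁₀⁰ = {C₁₀⁰, M₁⁰, D₁₀⁰} -/
def isV10 (x : BT k) : Bool :=
  x == C false 1 false false || x == M false 1 false || x == D false 1 false false

/-- the bar involution on V ∪ V̄ (identity elsewhere) -/
def barOp : BT k → BT k
  | C b i r s => C (!b) i r s
  | D b i r s => D (!b) i r s
  | M b i r => M (!b) i r
  | x => x

/-- s₀ = C₁₀⁰, s₁ = M₁⁰, s₂ = D₁₀⁰ -/
def sel : Fin 3 → BT k := ![C false 1 false false, M false 1 false, D false 1 false false]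

/-- x ∧ⁱ y = x if x = y ∈ (P ∪ V₁₀⁰) \ {s_i}, else 0. -/
def meetI (i : Fin 3) (x y : BT k) : BT k :=
  if x = y ∧ (isP x ∨ isV10 x) ∧ x ≠ sel i then x else zero

/-- T₀(x) = P₂ if x ∈ {P₀,P₂}; P₀ if x = P₁; x if x ∈ V₀; else 0. -/
def T0 : BT k → BT k
  | P j => if j = 1 then P 0 else P 2
  | C false i r s => if i = 0 then C false i r s else zero
  | D false i r s => if i = 0 then D false i r s else zero
  | M false i r => if i = 0 then M false i r else zero
  | _ => zero

/-- T₁(x,y). -/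
def T1 (x y : BT k) : BT k :=
  if (x = P 0 ∧ y = P 0) ∨ (x = P 0 ∧ y = P 1) ∨ (x = P 1 ∧ y = P 0) ∨
     (x = P 0 ∧ y = P 2) ∨ (x = P 2 ∧ y = P 0) then P 1
  else if (x = P 1 ∨ x = P 2) ∧ (y = P 1 ∨ y = P 2) then P 2
  else if x = y ∧ isV10 x then x
  else zero

/-- J′(x,y,z) = x ∧ z if x = y or {x,y} ⊆ P; x if x = ȳ ∈ V ∪ V̄; else 0. -/
def J' (x y z : BT k) : BT k :=
  if x = y ∨ (isP x ∧ isP y) then meet x z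
  else if isVV y ∧ x = barOp y then x
  else zero

/-- the ternary discriminator: t(x,y,z) = z if x = y, else x. -/
def disc (x y z : BT k) : BT k := if x = y then z else x

/-- S₁(u,x,y,z). -/
def S1 (u x y z : BT k) : BT k :=
  if (u = one ∨ u = two) ∧ x = y ∧ y = z ∧ isUVV x then x
  else if isP x ∧ isP y ∧ isP z then disc x y z
  else zero

/-- S₂(u,v,x,y,z). -/
def S2 (u v x y z : BT k) : BT k :=
  if isVV v ∧ u = barOp v ∧ x = y ∧ y = z ∧ isVV x then x
  else if isP x ∧ isP y ∧ isP z then disc x y z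
  else zero

/-- L_{irt} for the instruction μ_i r s L μ_m (the barred clause is handled by carrying
the bar `b` of the argument through). -/
def Lop (i : Fin (k + 1)) (r s : Bool) (m : Fin (k + 1)) (t : Bool) :
    BT k → BT k → BT k → BT k := fun x y u =>
  match u with
  | P j => if x = one ∧ y = one then P j else zero
  | C b i' r' s' =>
      if x = one ∧ y = one ∧ i' = i ∧ r' = r then C b m t s'
      else if x = H ∧ y = one ∧ i' = i ∧ r' = r ∧ s' = t then M b m t
      else zero
  | M b i' r' => if x = two ∧ y = H ∧ i' = i ∧ r' = r then D b m t s else zero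
  | D b i' r' s' => if x = two ∧ y = two ∧ i' = i ∧ r' = r then D b m t s' else zero
  | _ => zero

/-- R_{irt} for the instruction μ_i r s R μ_m. -/
def Rop (i : Fin (k + 1)) (r s : Bool) (m : Fin (k + 1)) (t : Bool) :
    BT k → BT k → BT k → BT k := fun x y u =>
  match u with
  | P j => if x = one ∧ y = one then P j else zero
  | C b i' r' s' => if x = one ∧ y = one ∧ i' = i ∧ r' = r then C b m t s' else zero
  | M b i' r' => if x = H ∧ y = one ∧ i' = i ∧ r' = r then C b m t s else zero
  | D b i' r' s' =>
      if x = two ∧ y = H ∧ i' = i ∧ r' = r ∧ s' = t then M b m t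
      else if x = two ∧ y = two ∧ i' = i ∧ r' = r then D b m t s'
      else zero
  | _ => zero

end BT

/-- The forward machine operation determined by the unique instruction of T beginning
with μ_i r (for 1 ≤ i ≤ k) and the symbol t. -/
def fwd {k : ℕ} (T : TM k) (i : Fin (k + 1)) (r t : Bool) :
    BT k → BT k → BT k → BT k :=
  match T.instr i r with
  | (s, Dir.L, m) => BT.Lop i r s m t
  | (s, Dir.R, m) => BT.Rop i r s m t

/-- the reverse of a machine operation: F°(x,y,u) = v when F(x,y,v) = u ≠ 0, else 0. -/
noncomputable def revOp {k : ℕ} (F : BT k → BT k → BT k → BT k) (x y u : BT k) : BT k :=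
  haveI := Classical.propDecidable (u ≠ BT.zero ∧ ∃ v, F x y v = u)
  if h : u ≠ BT.zero ∧ ∃ v, F x y v = u then h.2.choose else BT.zero

/-- The machine operations ℳ: `b = false` gives the forward operation, `b = true` the
reverse operation. -/
noncomputable def mop {k : ℕ} (T : TM k) (i : Fin (k + 1)) (r t : Bool) (b : Bool) :
    BT k → BT k → BT k → BT k :=
  match b with
  | false => fwd T i r t
  | true => revOp (fwd T i r t)

/-- The relation ≺ on U: 2≺2, 2≺H, H≺1, 1≺1. -/
def prec {k : ℕ} : BT k → BT k → Bool
  | BT.two, BT.two => true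
  | BT.two, BT.H => true
  | BT.H, BT.one => true
  | BT.one, BT.one => true
  | _, _ => false

/-- U_i¹ built from the machine operation F. -/
def U1op {k : ℕ} (F : BT k → BT k → BT k → BT k) (x y z u : BT k) : BT k :=
  if prec x y ∧ prec x z ∧ y ≠ z ∧ BT.isVV (F x y u) then BT.barOp (F x y u)
  else if prec x y ∧ y = z then F x y u
  else BT.zero

/-- U_i² built from the machine operation F. -/
def U2op {k : ℕ} (F : BT k → BT k → BT k → BT k) (x y z u : BT k) : BT k :=
  if prec x z ∧ prec y z ∧ x ≠ y ∧ BT.isVV (F y z u) then BT.barOp (F y z u)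
  else if x = y ∧ prec y z then F y z u
  else BT.zero

/-- The n-ary polynomials of the algebra B(T): functions obtained by composing the basic
operations (the constant 0, T₀, T₁, ∧, ∧⁰, ∧¹, ∧², J′, S₁, S₂, the forward and reverse
machine operations, and the U_i¹, U_i²), coordinate projections and constants. -/
inductive PolyB {k : ℕ} (T : TM k) : {n : ℕ} → ((Fin n → BT k) → BT k) → Prop where
  | proj {n : ℕ} (i : Fin n) : PolyB T fun v => v i
  | const {n : ℕ} (c : BT k) : PolyB T fun _ : Fin n → BT k => c
  | t0 {n : ℕ} {p : (Fin n → BT k) → BT k} :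
      PolyB T p → PolyB T fun v => BT.T0 (p v)
  | t1 {n : ℕ} {p q : (Fin n → BT k) → BT k} :
      PolyB T p → PolyB T q → PolyB T fun v => BT.T1 (p v) (q v)
  | meet {n : ℕ} {p q : (Fin n → BT k) → BT k} :
      PolyB T p → PolyB T q → PolyB T fun v => BT.meet (p v) (q v)
  | meetI (j : Fin 3) {n : ℕ} {p q : (Fin n → BT k) → BT k} :
      PolyB T p → PolyB T q → PolyB T fun v => BT.meetI j (p v) (q v)
  | jop {n : ℕ} {p q r : (Fin n → BT k) → BT k} :
      PolyB T p → PolyB T q → PolyB T r → PolyB T fun v => BT.J' (p v) (q v) (r v)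
  | s1 {n : ℕ} {p q r s : (Fin n → BT k) → BT k} :
      PolyB T p → PolyB T q → PolyB T r → PolyB T s →
      PolyB T fun v => BT.S1 (p v) (q v) (r v) (s v)
  | s2 {n : ℕ} {p q r s w : (Fin n → BT k) → BT k} :
      PolyB T p → PolyB T q → PolyB T r → PolyB T s → PolyB T w →
      PolyB T fun v => BT.S2 (p v) (q v) (r v) (s v) (w v)
  | mach (i : Fin (k + 1)) (hi : i ≠ 0) (r t b : Bool) {n : ℕ}
      {p q u : (Fin n → BT k) → BT k} :
      PolyB T p → PolyB T q → PolyB T u →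
      PolyB T fun v => mop T i r t b (p v) (q v) (u v)
  | u1 (i : Fin (k + 1)) (hi : i ≠ 0) (r t b : Bool) {n : ℕ}
      {p q r' s : (Fin n → BT k) → BT k} :
      PolyB T p → PolyB T q → PolyB T r' → PolyB T s →
      PolyB T fun v => U1op (mop T i r t b) (p v) (q v) (r' v) (s v)
  | u2 (i : Fin (k + 1)) (hi : i ≠ 0) (r t b : Bool) {n : ℕ}
      {p q r' s : (Fin n → BT k) → BT k} :
      PolyB T p → PolyB T q → PolyB T r' → PolyB T s →
      PolyB T fun v => U2op (mop T i r t b) (p v) (q v) (r' v) (s v)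

/-- unary polynomials of B(T) -/
def UPolyB {k : ℕ} (T : TM k) (F : BT k → BT k) : Prop :=
  PolyB T (n := 1) fun v => F (v 0)

/-- binary polynomials of B(T) -/
def BPolyB {k : ℕ} (T : TM k) (F : BT k → BT k → BT k) : Prop :=
  PolyB T (n := 2) fun v => F (v 0) (v 1)

/-- A Turing machine configuration ⟨tape, head position, state⟩. -/
structure Cfg (k : ℕ) : Type where
  tape : ℤ → Bool
  pos : ℤ
  state : Fin (k + 1)

/-- One computation step of T (halted configurations, in state μ₀, are fixed). -/
def cfgStep {k : ℕ} (T : TM k) (c : Cfg k) : Cfg k :=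
  if c.state = 0 then c
  else
    match T.instr c.state (c.tape c.pos) with
    | (s, Dir.L, m) => ⟨Function.update c.tape c.pos s, c.pos - 1, m⟩
    | (s, Dir.R, m) => ⟨Function.update c.tape c.pos s, c.pos + 1, m⟩

/-- The initial configuration Q₀ = ⟨t₀, 0, μ₁⟩, t₀ the all-zero tape. -/
def Q0 (k : ℕ) : Cfg k := ⟨fun _ => false, 0, 1⟩

/-- N = {n₀,…,n_m} ∪ {−1,0,1}: the squares visited during the halting computation
Q₀, …, Q_m, together with −1, 0, 1. -/
def Nset {k : ℕ} (T : TM k) (m : ℕ) : Finset ℤ :=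
  ((Finset.range (m + 1)).image fun j => ((cfgStep T)^[j] (Q0 k)).pos) ∪ {-1, 0, 1}

/-- The universe of the direct power A = B(T)^Y, where Y = {s₀} ∪ N: the coordinate
`none` is the extra coordinate s₀ ∉ N, and `some x` the coordinate x ∈ N. -/
abbrev AA {k : ℕ} (T : TM k) (m : ℕ) : Type := Option {x : ℤ // x ∈ Nset T m} → BT k

/-- The sequential generator a_n (n ∈ N). -/
def aEl {k : ℕ} (T : TM k) (m : ℕ) (n : ℤ) : AA T m := fun y =>
  match y with
  | none => BT.one
  | some x => if x.1 < n then BT.one else if x.1 = n then BT.H else BT.two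

/-- The generator q^j (j ∈ {0,1,2}). -/
def qEl {k : ℕ} (T : TM k) (m : ℕ) (j : Fin 3) : AA T m := fun y =>
  match y with
  | none => BT.P j
  | some x =>
      if x.1 < 0 then BT.C false 1 false false
      else if x.1 = 0 then BT.M false 1 false
      else BT.D false 1 false false

/-- K: the subalgebra of A = B(T)^Y generated by S ∪ {q⁰,q¹,q²}
(operations computed coordinatewise). -/
inductive InK {k : ℕ} (T : TM k) (m : ℕ) : AA T m → Prop where
  | gen_a (n : ℤ) (hn : n ∈ Nset T m) : InK T m (aEl T m n)
  | gen_q (j : Fin 3) : InK T m (qEl T m j)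
  | zeroOp : InK T m fun _ => BT.zero
  | t0 {f : AA T m} : InK T m f → InK T m fun y => BT.T0 (f y)
  | t1 {f g : AA T m} : InK T m f → InK T m g → InK T m fun y => BT.T1 (f y) (g y)
  | meet {f g : AA T m} : InK T m f → InK T m g → InK T m fun y => BT.meet (f y) (g y)
  | meetI (j : Fin 3) {f g : AA T m} :
      InK T m f → InK T m g → InK T m fun y => BT.meetI j (f y) (g y)
  | jop {f g h : AA T m} : InK T m f → InK T m g → InK T m h →
      InK T m fun y => BT.J' (f y) (g y) (h y)
  | s1 {f g h p : AA T m} : InK T m f → InK T m g → InK T m h → InK T m p →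
      InK T m fun y => BT.S1 (f y) (g y) (h y) (p y)
  | s2 {f g h p q : AA T m} : InK T m f → InK T m g → InK T m h → InK T m p → InK T m q →
      InK T m fun y => BT.S2 (f y) (g y) (h y) (p y) (q y)
  | mach (i : Fin (k + 1)) (hi : i ≠ 0) (r t b : Bool) {f g h : AA T m} :
      InK T m f → InK T m g → InK T m h →
      InK T m fun y => mop T i r t b (f y) (g y) (h y)
  | u1 (i : Fin (k + 1)) (hi : i ≠ 0) (r t b : Bool) {f g h p : AA T m} :
      InK T m f → InK T m g → InK T m h → InK T m p →
      InK T m fun y => U1op (mop T i r t b) (f y) (g y) (h y) (p y)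
  | u2 (i : Fin (k + 1)) (hi : i ≠ 0) (r t b : Bool) {f g h p : AA T m} :
      InK T m f → InK T m g → InK T m h → InK T m p →
      InK T m fun y => U2op (mop T i r t b) (f y) (g y) (h y) (p y)

/-- The n-ary polynomials of the algebra K: compositions of the basic operations
(computed coordinatewise), coordinate projections, and constants from K. -/
inductive PolyK {k : ℕ} (T : TM k) (m : ℕ) :
    {n : ℕ} → ((Fin n → AA T m) → AA T m) → Prop where
  | proj {n : ℕ} (i : Fin n) : PolyK T m fun v => v i
  | const {n : ℕ} (c : AA T m) (hc : InK T m c) : PolyK T m fun _ : Fin n → AA T m => c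
  | zeroOp {n : ℕ} : PolyK T m fun (_ : Fin n → AA T m) _ => BT.zero
  | t0 {n : ℕ} {p : (Fin n → AA T m) → AA T m} :
      PolyK T m p → PolyK T m fun v y => BT.T0 (p v y)
  | t1 {n : ℕ} {p q : (Fin n → AA T m) → AA T m} :
      PolyK T m p → PolyK T m q → PolyK T m fun v y => BT.T1 (p v y) (q v y)
  | meet {n : ℕ} {p q : (Fin n → AA T m) → AA T m} :
      PolyK T m p → PolyK T m q → PolyK T m fun v y => BT.meet (p v y) (q v y)
  | meetI (j : Fin 3) {n : ℕ} {p q : (Fin n → AA T m) → AA T m} :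
      PolyK T m p → PolyK T m q → PolyK T m fun v y => BT.meetI j (p v y) (q v y)
  | jop {n : ℕ} {p q r : (Fin n → AA T m) → AA T m} :
      PolyK T m p → PolyK T m q → PolyK T m r →
      PolyK T m fun v y => BT.J' (p v y) (q v y) (r v y)
  | s1 {n : ℕ} {p q r s : (Fin n → AA T m) → AA T m} :
      PolyK T m p → PolyK T m q → PolyK T m r → PolyK T m s →
      PolyK T m fun v y => BT.S1 (p v y) (q v y) (r v y) (s v y)
  | s2 {n : ℕ} {p q r s w : (Fin n → AA T m) → AA T m} :
      PolyK T m p → PolyK T m q → PolyK T m r → PolyK T m s → PolyK T m w →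
      PolyK T m fun v y => BT.S2 (p v y) (q v y) (r v y) (s v y) (w v y)
  | mach (i : Fin (k + 1)) (hi : i ≠ 0) (r t b : Bool) {n : ℕ}
      {p q u : (Fin n → AA T m) → AA T m} :
      PolyK T m p → PolyK T m q → PolyK T m u →
      PolyK T m fun v y => mop T i r t b (p v y) (q v y) (u v y)
  | u1 (i : Fin (k + 1)) (hi : i ≠ 0) (r t b : Bool) {n : ℕ}
      {p q r' s : (Fin n → AA T m) → AA T m} :
      PolyK T m p → PolyK T m q → PolyK T m r' → PolyK T m s →
      PolyK T m fun v y => U1op (mop T i r t b) (p v y) (q v y) (r' v y) (s v y)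
  | u2 (i : Fin (k + 1)) (hi : i ≠ 0) (r t b : Bool) {n : ℕ}
      {p q r' s : (Fin n → AA T m) → AA T m} :
      PolyK T m p → PolyK T m q → PolyK T m r' → PolyK T m s →
      PolyK T m fun v y => U2op (mop T i r t b) (p v y) (q v y) (r' v y) (s v y)

/-- unary polynomials of K -/
def UPolyK {k : ℕ} (T : TM k) (m : ℕ) (F : AA T m → AA T m) : Prop :=
  PolyK T m (n := 1) fun v => F (v 0)

/-- binary polynomials of K -/
def BPolyK {k : ℕ} (T : TM k) (m : ℕ) (F : AA T m → AA T m → AA T m) : Prop :=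
  PolyK T m (n := 2) fun v => F (v 0) (v 1)

/-- Q ∈ Cfg⋆: T, started in configuration Q, reaches the halting configuration
Q_m in finitely many steps, the head visiting only squares in N. -/
def InCfgStar {k : ℕ} (T : TM k) (m : ℕ) (Q : Cfg k) : Prop :=
  ∃ j : ℕ, (cfgStep T)^[j] Q = (cfgStep T)^[m] (Q0 k) ∧
    ∀ l ≤ j, ((cfgStep T)^[l] Q).pos ∈ Nset T m

/-- β^j(Q): the encoding of the configuration Q (with P_j in coordinate s₀). -/
def betaEl {k : ℕ} (T : TM k) (m : ℕ) (j : Fin 3) (Q : Cfg k) : AA T m := fun y =>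
  match y with
  | none => BT.P j
  | some x =>
      if x.1 < Q.pos then BT.C false Q.state (Q.tape Q.pos) (Q.tape x.1)
      else if x.1 = Q.pos then BT.M false Q.state (Q.tape Q.pos)
      else BT.D false Q.state (Q.tape Q.pos) (Q.tape x.1)

/-- K₀ = {f ∈ K : f(x) = 0 for some x ∈ N}. -/
def K0 {k : ℕ} (T : TM k) (m : ℕ) : Set (AA T m) :=
  {f | InK T m f ∧ ∃ x : {x : ℤ // x ∈ Nset T m}, f (some x) = BT.zero}

/-- S = {a_n : n ∈ N}. -/
def Sset {k : ℕ} (T : TM k) (m : ℕ) : Set (AA T m) :=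
  {f | ∃ n ∈ Nset T m, f = aEl T m n}

/-- Λ = {β^j(Q) : Q ∈ Cfg⋆, j ∈ {0,1,2}}. -/
def Lam {k : ℕ} (T : TM k) (m : ℕ) : Set (AA T m) :=
  {f | ∃ (j : Fin 3) (Q : Cfg k), InCfgStar T m Q ∧ f = betaEl T m j Q}

/-- θ: (f,g) ∈ θ iff f, g ∈ K and for every unary polynomial F of K,
F(f) = q² ⇔ F(g) = q². -/
def theta {k : ℕ} (T : TM k) (m : ℕ) (f g : AA T m) : Prop :=
  InK T m f ∧ InK T m g ∧
    ∀ F : AA T m → AA T m, UPolyK T m F → (F f = qEl T m 2 ↔ F g = qEl T m 2)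

/-- A congruence of K: an equivalence relation on K preserved by all basic operations. -/
structure IsCongK {k : ℕ} (T : TM k) (m : ℕ) (R : AA T m → AA T m → Prop) : Prop where
  refl : ∀ f, InK T m f → R f f
  symm : ∀ {f g}, R f g → R g f
  trans : ∀ {f g h}, R f g → R g h → R f h
  dom : ∀ {f g}, R f g → InK T m f ∧ InK T m g
  t0 : ∀ {f f'}, R f f' → R (fun y => BT.T0 (f y)) (fun y => BT.T0 (f' y))
  t1 : ∀ {f f' g g'}, R f f' → R g g' →
    R (fun y => BT.T1 (f y) (g y)) (fun y => BT.T1 (f' y) (g' y))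
  meet : ∀ {f f' g g'}, R f f' → R g g' →
    R (fun y => BT.meet (f y) (g y)) (fun y => BT.meet (f' y) (g' y))
  meetI : ∀ (j : Fin 3) {f f' g g'}, R f f' → R g g' →
    R (fun y => BT.meetI j (f y) (g y)) (fun y => BT.meetI j (f' y) (g' y))
  jop : ∀ {f f' g g' h h'}, R f f' → R g g' → R h h' →
    R (fun y => BT.J' (f y) (g y) (h y)) (fun y => BT.J' (f' y) (g' y) (h' y))
  s1 : ∀ {f f' g g' h h' p p'}, R f f' → R g g' → R h h' → R p p' →
    R (fun y => BT.S1 (f y) (g y) (h y) (p y))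
      (fun y => BT.S1 (f' y) (g' y) (h' y) (p' y))
  s2 : ∀ {f f' g g' h h' p p' q q'}, R f f' → R g g' → R h h' → R p p' → R q q' →
    R (fun y => BT.S2 (f y) (g y) (h y) (p y) (q y))
      (fun y => BT.S2 (f' y) (g' y) (h' y) (p' y) (q' y))
  mach : ∀ (i : Fin (k + 1)), i ≠ 0 → ∀ (r t b : Bool) {f f' g g' h h'},
    R f f' → R g g' → R h h' →
    R (fun y => mop T i r t b (f y) (g y) (h y))
      (fun y => mop T i r t b (f' y) (g' y) (h' y))
  u1 : ∀ (i : Fin (k + 1)), i ≠ 0 → ∀ (r t b : Bool) {f f' g g' h h' p p'},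
    R f f' → R g g' → R h h' → R p p' →
    R (fun y => U1op (mop T i r t b) (f y) (g y) (h y) (p y))
      (fun y => U1op (mop T i r t b) (f' y) (g' y) (h' y) (p' y))
  u2 : ∀ (i : Fin (k + 1)), i ≠ 0 → ∀ (r t b : Bool) {f f' g g' h h' p p'},
    R f f' → R g g' → R h h' → R p p' →
    R (fun y => U2op (mop T i r t b) (f y) (g y) (h y) (p y))
      (fun y => U2op (mop T i r t b) (f' y) (g' y) (h' y) (p' y))

/-- θ̄: the smallest congruence of K containing θ ∪ {(q⁰,q²)} (the intersection of all
congruences of K containing θ and (q⁰,q²)). -/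
def thetaBar {k : ℕ} (T : TM k) (m : ℕ) (f g : AA T m) : Prop :=
  InK T m f ∧ InK T m g ∧
    ∀ R : AA T m → AA T m → Prop, IsCongK T m R → (∀ a b, theta T m a b → R a b) →
      R (qEl T m 0) (qEl T m 2) → R f g

/-!
The elements `q⁰, q¹, q²` differ only at `s₀`, where they take the values `P₀, P₁, P₂`. The order
on `P` is preserved by every basic operation except `∧⁰, ∧¹, ∧²`, `S₁` and `S₂`. On `P`, the value
of `x ∧ⁱ y` is either the common value of `x` and `y` or `0`, so the order survives as long as no
zero appears. `S₁` and `S₂` only produce elements with a zero on `N`: an element of `K` without such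
a zero is either some `a_n` or takes only unbarred values in `V` on `N`, since barred values could
only come from two distinct successors or two distinct predecessors of the same `a_n`, and there
are none. As `a_n` takes the value `H` at `n`, the condition `u ∈ {1,2}` of `S₁` fails somewhere on
`N`. In the absence of barred values, so does the condition `u = v̄` of `S₂`, and the clause
`x = ȳ` of `J′` never applies; hence a zero on `N` is never cancelled.
-/

namespace BT

variable {k : ℕ}

/-- Membership in `V`, the set of unbarred machine elements. -/
def isV : BT k → Bool
  | C b _ _ _ => !b
  | D b _ _ _ => !b
  | M b _ _ => !b
  | _ => false

/-- Membership in `U ∪ V`, which contains all values on `N` of the elements of `K` that have no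
zero on `N`. -/
def isUV (x : BT k) : Bool := isU x || isV x

theorem isUV_of_isU {x : BT k} (h : isU x = true) : isUV x = true := by
  simp [isUV, h]

theorem isUV_of_isV {x : BT k} (h : isV x = true) : isUV x = true := by
  simp [isUV, h]

theorem isU_eq_false_of_isV {x : BT k} (h : isV x = true) : isU x = false := by
  cases x <;> simp_all [isV, isU]

theorem isP_eq_false_of_isUV {x : BT k} (h : isUV x = true) : isP x = false := by
  cases x <;> simp_all [isUV, isU, isV, isP]

theorem ne_barOp_of_isUV {x y : BT k} (hx : isUV x = true) (hy : isUV y = true)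
    (hV : isVV y = true) : x ≠ barOp y := by
  rintro rfl
  cases y <;> simp_all [isUV, isU, isV, isVV, barOp]

section Zero

theorem T0_zero : T0 (zero : BT k) = zero := rfl

theorem T1_zero_left (y : BT k) : T1 zero y = zero := by simp [T1, isV10]

theorem T1_zero_right (x : BT k) : T1 x zero = zero := by
  simp only [T1, reduceCtorEq, and_false, or_self, if_false, ite_eq_right_iff]
  exact fun h => h.1

theorem meet_zero_left (y : BT k) : meet zero y = zero := by simp [meet]

theorem meet_zero_right (x : BT k) : meet x zero = zero := by simp [meet]

theorem meetI_zero_left (i : Fin 3) (y : BT k) : meetI i zero y = zero := by simp [meetI]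

theorem meetI_zero_right (i : Fin 3) (x : BT k) : meetI i x zero = zero := by
  simp only [meetI, ite_eq_right_iff]
  exact fun h => h.1

theorem J'_zero_left (y z : BT k) : J' zero y z = zero := by
  simp [J', meet_zero_left]

theorem J'_zero_middle (x z : BT k) : J' x zero z = zero := by
  simp only [J', isP, isVV, Bool.false_eq_true, and_false, or_false, false_and, if_false,
    ite_eq_right_iff]
  rintro rfl
  exact meet_zero_left z

theorem S1_zero (u y z : BT k) : S1 u zero y z = zero := by simp [S1, isP]

theorem S2_zero (u v y z : BT k) : S2 u v zero y z = zero := by simp [S2, isP]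

end Zero

section OutsideP

variable {u v x y z : BT k}

theorem T0_eq_zero_of_isU (h : isU x = true) : T0 x = zero := by
  cases x <;> simp_all [isU, T0]

theorem isV_T0 (hx : isV x = true) (h : T0 x ≠ zero) : isV (T0 x) = true := by
  rcases x with _ | _ | _ | _ | _ | ⟨_ | _, _⟩ | ⟨_ | _, _⟩ | ⟨_ | _, _⟩ <;> simp_all [T0, isV]

theorem eq_of_T1_ne_zero (hx : isUV x = true) (h : T1 x y ≠ zero) : x = y ∧ T1 x y = x := by
  have hP (j : Fin 3) : x ≠ P j := by
    rintro rfl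
    simp [isUV, isU, isV] at hx
  simp only [T1, hP, false_and, or_self, if_false, ne_eq, ite_eq_right_iff, not_forall] at h ⊢
  obtain ⟨hxy, -⟩ := h
  exact ⟨hxy.1, if_pos hxy⟩

theorem eq_of_meet_ne_zero (hx : isUV x = true) (h : meet x y ≠ zero) :
    x = y ∧ meet x y = x := by
  have hP (j : Fin 3) : x ≠ P j := by
    rintro rfl
    simp [isUV, isU, isV] at hx
  simp only [meet, hP, false_and, and_false, or_self, if_false, ne_eq, ite_eq_right_iff,
    not_forall] at h ⊢
  obtain ⟨hxy, -⟩ := h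
  exact ⟨hxy, if_pos hxy⟩

theorem eq_of_meetI_ne_zero {i : Fin 3} (h : meetI i x y ≠ zero) : x = y ∧ meetI i x y = x := by
  simp only [meetI, ne_eq, ite_eq_right_iff, not_forall] at h ⊢
  obtain ⟨hxy, -⟩ := h
  exact ⟨hxy.1, if_pos hxy⟩

theorem meet_self (x : BT k) : meet x x = x := if_pos rfl

theorem J'_self (x z : BT k) : J' x x z = meet x z := if_pos (Or.inl rfl)

theorem eq_of_J'_ne_zero (hx : isUV x = true) (hy : isUV y = true) (h : J' x y z ≠ zero) :
    x = y := by
  by_contra hxy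
  have hbar : ¬(isVV y = true ∧ x = barOp y) := fun hV => ne_barOp_of_isUV hx hy hV.1 hV.2
  exact h (by simp [J', hxy, isP_eq_false_of_isUV hx, hbar])

theorem eq_one_or_eq_two_of_S1_ne_zero (hx : isUV x = true) (h : S1 u x y z ≠ zero) :
    u = one ∨ u = two := by
  by_contra hu
  exact h (by simp [S1, hu, isP_eq_false_of_isUV hx])

theorem eq_barOp_of_S2_ne_zero (hx : isUV x = true) (h : S2 u v x y z ≠ zero) :
    isVV v = true ∧ u = barOp v := by
  by_contra huv
  exact h (by simp [S2, ← and_assoc, huv, isP_eq_false_of_isUV hx])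

end OutsideP

section OnP

theorem T0_P (a : Fin 3) : T0 (P a : BT k) = P (if a = 1 then 0 else 2) := by
  simp only [T0]
  split_ifs <;> rfl

theorem T1_P (a b : Fin 3) : T1 (P a : BT k) (P b) = P (if a = 0 ∨ b = 0 then 1 else 2) := by
  fin_cases a <;> fin_cases b <;> simp [T1]

theorem meet_P (a b : Fin 3) : meet (P a : BT k) (P b) = P (if a = b then a else 2) := by
  fin_cases a <;> fin_cases b <;> simp [meet]

theorem meetI_P (i a b : Fin 3) :
    meetI i (P a : BT k) (P b) = if a = b then P a else zero := by
  have hsel : (P a : BT k) ≠ sel i := by fin_cases i <;> simp [sel]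
  simp [meetI, isP, hsel]

theorem J'_P (a b : Fin 3) (z : BT k) : J' (P a) (P b) z = meet (P a) z := by
  simp [J', isP]

theorem le_P_iff {a b : Fin 3} : le (P a : BT k) (P b) ↔ a = b ∨ a = 2 := by
  simp only [le, reduceCtorEq, P.injEq, false_or]
  revert a b
  decide

/-- `x` and `y` belong to `P` and `x ≤ y`, unless one of them is `0`. Allowing `y = 0` as well as
`x = 0` is what makes this relation compatible with the operations `∧ⁱ`. -/
def LeOnP (x y : BT k) : Prop :=
  x = zero ∨ y = zero ∨ ∃ a b, x = P a ∧ y = P b ∧ (a = b ∨ a = 2)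

namespace LeOnP

variable {x x' y y' z z' : BT k}

theorem zero_left (y : BT k) : LeOnP zero y := Or.inl rfl

theorem zero_right (x : BT k) : LeOnP x zero := Or.inr (Or.inl rfl)

theorem of_P {a b : Fin 3} (h : a = b ∨ a = 2) : LeOnP (P a : BT k) (P b) :=
  Or.inr (Or.inr ⟨a, b, rfl, rfl, h⟩)

theorem le (h : LeOnP x y) (hy : y ≠ zero) : le x y := by
  rcases h with rfl | rfl | ⟨a, b, rfl, rfl, h⟩
  · exact Or.inl rfl
  · exact absurd rfl hy
  · exact le_P_iff.2 h

theorem map {o : BT k → BT k} (h0 : o zero = zero)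
    (hP : ∀ a b, (a = b ∨ a = 2) → LeOnP (o (P a)) (o (P b))) (h : LeOnP x y) :
    LeOnP (o x) (o y) := by
  rcases h with rfl | rfl | ⟨a, b, rfl, rfl, h⟩
  · rw [h0]
    exact zero_left _
  · rw [h0]
    exact zero_right _
  · exact hP a b h

theorem map₂ {o : BT k → BT k → BT k} (hl : ∀ y, o zero y = zero) (hr : ∀ x, o x zero = zero)
    (hP : ∀ a a' b b', (a = a' ∨ a = 2) → (b = b' ∨ b = 2) →
      LeOnP (o (P a) (P b)) (o (P a') (P b')))
    (hx : LeOnP x x') (hy : LeOnP y y') : LeOnP (o x y) (o x' y') := by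
  rcases hx with rfl | rfl | ⟨a, a', rfl, rfl, ha⟩
  · rw [hl]
    exact zero_left _
  · rw [hl y']
    exact zero_right _
  · rcases hy with rfl | rfl | ⟨b, b', rfl, rfl, hb⟩
    · rw [hr]
      exact zero_left _
    · rw [hr (P a')]
      exact zero_right _
    · exact hP a a' b b' ha hb

theorem t0 (h : LeOnP x y) : LeOnP (T0 x) (T0 y) := by
  refine h.map T0_zero fun a b hab => ?_
  rw [T0_P, T0_P]
  refine of_P ?_
  revert a b
  decide

theorem t1 (hx : LeOnP x x') (hy : LeOnP y y') : LeOnP (T1 x y) (T1 x' y') := by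
  refine hx.map₂ T1_zero_left T1_zero_right (fun a a' b b' ha hb => ?_) hy
  rw [T1_P, T1_P]
  refine of_P ?_
  revert a a' b b'
  decide

theorem meet (hx : LeOnP x x') (hy : LeOnP y y') : LeOnP (BT.meet x y) (BT.meet x' y') := by
  refine hx.map₂ meet_zero_left meet_zero_right (fun a a' b b' ha hb => ?_) hy
  rw [meet_P, meet_P]
  refine of_P ?_
  revert a a' b b'
  decide

theorem meetI (i : Fin 3) (hx : LeOnP x x') (hy : LeOnP y y') :
    LeOnP (BT.meetI i x y) (BT.meetI i x' y') := by
  refine hx.map₂ (meetI_zero_left i) (meetI_zero_right i) (fun a a' b b' ha _ => ?_) hy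
  rw [meetI_P, meetI_P]
  split_ifs
  · exact of_P ha
  · exact zero_right _
  · exact zero_left _
  · exact zero_left _

theorem jop (hx : LeOnP x x') (hy : LeOnP y y') (hz : LeOnP z z') :
    LeOnP (J' x y z) (J' x' y' z') := by
  rcases hy with rfl | rfl | ⟨b, b', rfl, rfl, -⟩
  · rw [J'_zero_middle]
    exact zero_left _
  · rw [J'_zero_middle x']
    exact zero_right _
  · rcases id hx with rfl | rfl | ⟨a, a', rfl, rfl, -⟩
    · rw [J'_zero_left]
      exact zero_left _
    · rw [J'_zero_left (P b')]
      exact zero_right _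
    · simpa only [J'_P] using hx.meet hz

end LeOnP

end OnP

end BT

section MachineOperations

open BT

variable {k : ℕ} {T : TM k} {i : Fin (k + 1)} {r t b : Bool} {x y z u v : BT k}
  {F : BT k → BT k → BT k → BT k}

theorem isU_of_prec (h : prec x y = true) : isU x = true ∧ isU y = true := by
  cases x <;> cases y <;> simp_all [prec, isU]

theorem exists_fwd_eq (T : TM k) (i : Fin (k + 1)) (r t : Bool) :
    ∃ s j, fwd T i r t = Lop i r s j t ∨ fwd T i r t = Rop i r s j t := by
  rcases e : T.instr i r with ⟨s, _ | _, j⟩ <;> exact ⟨s, j, by simp [fwd, e]⟩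

theorem fwd_zero (x y : BT k) : fwd T i r t x y zero = zero := by
  obtain ⟨s, j, e | e⟩ := exists_fwd_eq T i r t <;> rw [e] <;> rfl

theorem fwd_one_one_eq_P {a : Fin 3} : fwd T i r t one one v = P a ↔ v = P a := by
  obtain ⟨s, j, e | e⟩ := exists_fwd_eq T i r t <;> rw [e] <;>
    cases v <;> simp only [Lop, Rop] <;> (try split_ifs) <;> simp_all

theorem prec_of_fwd_ne_zero (h : fwd T i r t x y u ≠ zero) : prec x y = true := by
  obtain ⟨s, j, e | e⟩ := exists_fwd_eq T i r t <;> rw [e] at h <;>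
    cases u <;> simp only [Lop, Rop] at h <;> (try split_ifs at h) <;> simp_all [prec]

theorem isU_fwd_eq_false : isU (fwd T i r t x y u) = false := by
  obtain ⟨s, j, e | e⟩ := exists_fwd_eq T i r t <;> rw [e] <;>
    cases u <;> simp only [Lop, Rop] <;> (try split_ifs) <;> rfl

theorem isU_eq_false_of_fwd_ne_zero (h : fwd T i r t x y u ≠ zero) : isU u = false := by
  obtain ⟨s, j, e | e⟩ := exists_fwd_eq T i r t <;> rw [e] at h <;>
    cases u <;> simp_all [Lop, Rop, isU]

theorem isV_fwd (h : fwd T i r t x y u ≠ zero) : isV (fwd T i r t x y u) = isV u := by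
  obtain ⟨s, j, e | e⟩ := exists_fwd_eq T i r t <;> rw [e] at h ⊢ <;>
    cases u <;> simp only [Lop, Rop] at h ⊢ <;> (try split_ifs at h ⊢) <;> simp_all [isV]

theorem apply_revOp (hu : u ≠ zero) (h : ∃ v, F x y v = u) : F x y (revOp F x y u) = u := by
  have e : revOp F x y u = h.choose := by
    simp only [revOp]
    exact dif_pos ⟨hu, h⟩
  exact e ▸ h.choose_spec

theorem apply_revOp_of_ne_zero (h : revOp F x y u ≠ zero) :
    F x y (revOp F x y u) = u ∧ u ≠ zero := by
  have hu : u ≠ zero ∧ ∃ v, F x y v = u := by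
    by_contra hu
    refine h ?_
    simp only [revOp]
    exact dif_neg hu
  exact ⟨apply_revOp hu.1 hu.2, hu.1⟩

theorem mop_zero (x y : BT k) : mop T i r t b x y zero = zero := by
  cases b
  · exact fwd_zero x y
  · by_contra h
    exact (apply_revOp_of_ne_zero h).2 rfl

theorem mop_one_one_P (a : Fin 3) : mop T i r t b one one (P a) = P a := by
  cases b
  · exact fwd_one_one_eq_P.2 rfl
  · exact fwd_one_one_eq_P.1 (apply_revOp (by simp) ⟨_, fwd_one_one_eq_P.2 rfl⟩)

theorem BT.LeOnP.mop_one_one (h : LeOnP x y) :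
    LeOnP (mop T i r t b one one x) (mop T i r t b one one y) := by
  refine h.map (mop_zero one one) fun a c hac => ?_
  rw [mop_one_one_P, mop_one_one_P]
  exact .of_P hac

theorem prec_of_mop_ne_zero (h : mop T i r t b x y u ≠ zero) : prec x y = true := by
  cases b
  · exact prec_of_fwd_ne_zero h
  · obtain ⟨e, hu⟩ := apply_revOp_of_ne_zero h
    exact prec_of_fwd_ne_zero (e.trans_ne hu)

theorem isU_eq_false_of_mop_ne_zero (h : mop T i r t b x y u ≠ zero) : isU u = false := by
  cases b
  · exact isU_eq_false_of_fwd_ne_zero h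
  · exact (apply_revOp_of_ne_zero h).1 ▸ isU_fwd_eq_false

theorem isV_mop (h : mop T i r t b x y u ≠ zero) : isV (mop T i r t b x y u) = isV u := by
  cases b
  · exact isV_fwd h
  · obtain ⟨e, hu⟩ := apply_revOp_of_ne_zero h
    have hV := isV_fwd (e.trans_ne hu)
    rw [e] at hV
    exact hV.symm

theorem prec_of_U1op_ne_zero (h : U1op F x y z u ≠ zero) :
    prec x y = true ∧ prec x z = true := by
  simp only [U1op] at h
  split_ifs at h with h1 h2
  · exact ⟨h1.1, h1.2.1⟩
  · exact ⟨h2.1, h2.2 ▸ h2.1⟩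
  · exact absurd rfl h

theorem prec_of_U2op_ne_zero (h : U2op F x y z u ≠ zero) :
    prec x z = true ∧ prec y z = true := by
  simp only [U2op] at h
  split_ifs at h with h1 h2
  · exact ⟨h1.1, h1.2.1⟩
  · exact ⟨h2.1 ▸ h2.2, h2.2⟩
  · exact absurd rfl h

theorem U1op_self (h : prec x y = true) : U1op F x y y u = F x y u := by
  simp [U1op, h]

theorem U2op_self (h : prec x z = true) : U2op F x x z u = F x z u := by
  simp [U2op, h]

end MachineOperations

section SequentialGenerators

variable {k : ℕ} {T : TM k} {m : ℕ}

theorem aEl_of_lt {n : ℤ} {x : Nset T m} (h : x < n) : aEl T m n (some x) = BT.one := by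
  simp [aEl, h]

theorem aEl_self (n : Nset T m) : aEl T m n (some n) = BT.H := by
  simp [aEl]

theorem aEl_of_gt {n : ℤ} {x : Nset T m} (h : n < x) : aEl T m n (some x) = BT.two := by
  simp [aEl, h.not_gt, h.ne']

theorem isU_aEl (n : ℤ) (y : Option (Nset T m)) : BT.isU (aEl T m n y) = true := by
  rcases y with _ | x
  · rfl
  · simp only [aEl]
    split_ifs <;> rfl

theorem eq_of_aEl_eq_on {n n' : Nset T m}
    (h : ∀ x, aEl T m n (some x) = aEl T m n' (some x)) : n = n' := by
  have hn := h n
  rw [aEl_self] at hn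
  rcases lt_trichotomy n n' with hlt | heq | hgt
  · simp [aEl_of_lt hlt] at hn
  · exact heq
  · simp [aEl_of_gt hgt] at hn

theorem covBy_of_prec_aEl {n n' : Nset T m}
    (h : ∀ x, prec (aEl T m n (some x)) (aEl T m n' (some x)) = true) : n ⋖ n' := by
  have hlt : n < n' := by
    have hn := h n
    rw [aEl_self] at hn
    rcases lt_trichotomy n n' with hlt | rfl | hgt
    · exact hlt
    · simp [aEl_self, prec] at hn
    · simp [aEl_of_gt hgt, prec] at hn
  refine ⟨hlt, fun l hl hl' => ?_⟩
  have hprec := h l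
  rw [aEl_of_gt hl, aEl_of_lt hl'] at hprec
  simp [prec] at hprec

end SequentialGenerators

section OrderRelation

open BT

variable {k : ℕ} {T : TM k} {m : ℕ} {f f' g g' h h' p p' q q' : AA T m}

/-- Both elements are the same sequential generator. -/
def IsSeqPair (f f' : AA T m) : Prop :=
  ∃ n : Nset T m, f = aEl T m n ∧ f' = aEl T m n

/-- `f` has values in `V` on `N`, and `f ≤ f'` at `s₀` as elements of `P ∪ {0}`, in the sense of
`LeOnP`. This is meant for pairs that agree on `N`. -/
structure IsMachPair (f f' : AA T m) : Prop where
  isV : ∀ x, isV (f (some x)) = true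
  leOnP : LeOnP (f none) (f' none)

/-- The order on `K` weakened so that all basic operations preserve it: the elements agree on `N`,
and nothing is asked at `s₀` if they have a zero on `N`. -/
structure OrderRel (f f' : AA T m) : Prop where
  eq_on : ∀ x, f (some x) = f' (some x)
  isSeqPair_or_isMachPair : (∀ x, f (some x) ≠ zero) → IsSeqPair f f' ∨ IsMachPair f f'

/-- The square `0`, witnessing that `N` is nonempty. -/
def origin (T : TM k) (m : ℕ) : Nset T m := ⟨0, by simp [Nset]⟩

namespace IsSeqPair

theorem isU (hf : IsSeqPair f f') (y) : BT.isU (f y) = true := by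
  obtain ⟨n, rfl, -⟩ := hf
  exact isU_aEl n y

theorem eq_of_eq_on (hf : IsSeqPair f f') (hg : IsSeqPair g g')
    (hfg : ∀ x, f (some x) = g (some x)) : f = g ∧ f' = g' := by
  obtain ⟨n, rfl, rfl⟩ := hf
  obtain ⟨n', rfl, rfl⟩ := hg
  rw [eq_of_aEl_eq_on hfg]
  exact ⟨rfl, rfl⟩

theorem eq_of_prec (hf : IsSeqPair f f') (hg : IsSeqPair g g') (hh : IsSeqPair h h')
    (hfg : ∀ x, prec (f (some x)) (g (some x)) = true)
    (hfh : ∀ x, prec (f (some x)) (h (some x)) = true) : g = h ∧ g' = h' := by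
  obtain ⟨n, rfl, rfl⟩ := hf
  obtain ⟨n₁, rfl, rfl⟩ := hg
  obtain ⟨n₂, rfl, rfl⟩ := hh
  rw [(covBy_of_prec_aEl hfg).unique_right (covBy_of_prec_aEl hfh)]
  exact ⟨rfl, rfl⟩

theorem eq_of_prec_right (hf : IsSeqPair f f') (hg : IsSeqPair g g') (hh : IsSeqPair h h')
    (hfh : ∀ x, prec (f (some x)) (h (some x)) = true)
    (hgh : ∀ x, prec (g (some x)) (h (some x)) = true) : f = g ∧ f' = g' := by
  obtain ⟨n, rfl, rfl⟩ := hf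
  obtain ⟨n₁, rfl, rfl⟩ := hg
  obtain ⟨n₂, rfl, rfl⟩ := hh
  rw [(covBy_of_prec_aEl hfh).unique_left (covBy_of_prec_aEl hgh)]
  exact ⟨rfl, rfl⟩

theorem prec_apply (hf : IsSeqPair f f') (hg : IsSeqPair g g')
    (hfg : ∀ x, prec (f (some x)) (g (some x)) = true) (y) :
    prec (f y) (g y) = true ∧ prec (f' y) (g' y) = true := by
  obtain ⟨n, rfl, rfl⟩ := hf
  obtain ⟨n', rfl, rfl⟩ := hg
  cases y
  · exact ⟨rfl, rfl⟩
  · exact ⟨hfg _, hfg _⟩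

end IsSeqPair

namespace OrderRel

theorem isUV (hf : OrderRel f f') (hz : ∀ x, f (some x) ≠ zero) (x) :
    BT.isUV (f (some x)) = true := by
  rcases hf.isSeqPair_or_isMachPair hz with hs | hm
  · exact isUV_of_isU (hs.isU _)
  · exact isUV_of_isV (hm.isV x)

theorem isSeqPair (hf : OrderRel f f') (hU : ∀ x, isU (f (some x)) = true) :
    IsSeqPair f f' := by
  refine (hf.isSeqPair_or_isMachPair fun x e => ?_).resolve_right fun hm => ?_
  · simpa [e, isU] using hU x
  · simpa [isU_eq_false_of_isV (hm.isV (origin T m))] using hU (origin T m)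

theorem isMachPair (hf : OrderRel f f') (hV : ∀ x, isV (f (some x)) = true) :
    IsMachPair f f' := by
  refine (hf.isSeqPair_or_isMachPair fun x e => ?_).resolve_left fun hs => ?_
  · simpa [e, isV] using hV x
  · simpa [isU_eq_false_of_isV (hV (origin T m))] using hs.isU (some (origin T m))

theorem le (hf : OrderRel f f') (hz : ∀ y, f' y ≠ zero) (y) : BT.le (f y) (f' y) := by
  rcases y with _ | x
  · rcases hf.isSeqPair_or_isMachPair fun x => (hf.eq_on x).trans_ne (hz _) with ⟨n, rfl, rfl⟩ | hm
    · exact Or.inr (Or.inl rfl)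
    · exact hm.leOnP.le (hz none)
  · exact Or.inr (Or.inl (hf.eq_on x))

theorem zero : OrderRel (fun _ => BT.zero : AA T m) fun _ => BT.zero :=
  ⟨fun _ => rfl, fun hz => absurd rfl (hz (origin T m))⟩

theorem aEl (n : Nset T m) : OrderRel (aEl T m n) (aEl T m n) :=
  ⟨fun _ => rfl, fun _ => Or.inl ⟨n, rfl, rfl⟩⟩

theorem qEl {a b : Fin 3} (hab : a = b ∨ a = 2) : OrderRel (qEl T m a) (qEl T m b) := by
  refine ⟨fun _ => rfl, fun _ => Or.inr ⟨fun x => ?_, .of_P hab⟩⟩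
  simp only [Paper.qEl]
  split_ifs <;> rfl

theorem t0 (hf : OrderRel f f') : OrderRel (fun y => T0 (f y)) fun y => T0 (f' y) := by
  refine ⟨fun x => by rw [hf.eq_on], fun hz => ?_⟩
  rcases hf.isSeqPair_or_isMachPair fun x e => hz x (by rw [e, T0_zero]) with hs | hm
  · exact absurd (T0_eq_zero_of_isU (hs.isU _)) (hz (origin T m))
  · exact Or.inr ⟨fun x => isV_T0 (hm.isV x) (hz x), hm.leOnP.t0⟩

/-- Outside `P`, the operations `T₁`, `∧` and `∧ⁱ` all are restrictions of the meet of a flat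
semilattice. -/
theorem map₂ {o : BT k → BT k → BT k} (hzero : ∀ y, o BT.zero y = BT.zero)
    (hdiag : ∀ {x y}, BT.isUV x = true → o x y ≠ BT.zero → x = y ∧ o x y = x)
    (hone : o H H ≠ BT.zero → o one one = one)
    (hP : ∀ {x x' y y'}, LeOnP x x' → LeOnP y y' → LeOnP (o x y) (o x' y'))
    (hf : OrderRel f f') (hg : OrderRel g g') :
    OrderRel (fun y => o (f y) (g y)) fun y => o (f' y) (g' y) := by
  refine ⟨fun x => by rw [hf.eq_on, hg.eq_on], fun hz => ?_⟩
  have hf0 x (e : f (some x) = BT.zero) : False := hz x (by rw [e, hzero])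
  have hfg x := hdiag (hf.isUV hf0 x) (hz x)
  rcases hf.isSeqPair_or_isMachPair hf0 with hs | hm
  · have hsg := hg.isSeqPair fun x => (hfg x).1 ▸ hs.isU _
    obtain ⟨rfl, rfl⟩ := hs.eq_of_eq_on hsg fun x => (hfg x).1
    obtain ⟨n, rfl, rfl⟩ := hs
    have ho : (fun y => o (Paper.aEl T m n y) (Paper.aEl T m n y)) = Paper.aEl T m n := by
      funext y
      cases y
      · exact hone (by simpa only [aEl_self] using hz n)
      · exact (hfg _).2
    exact Or.inl ⟨n, ho, ho⟩
  · have hmg := hg.isMachPair fun x => (hfg x).1 ▸ hm.isV x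
    refine Or.inr ⟨fun x => ?_, hP hm.leOnP hmg.leOnP⟩
    rw [(hfg x).2]
    exact hm.isV x

theorem t1 (hf : OrderRel f f') (hg : OrderRel g g') :
    OrderRel (fun y => T1 (f y) (g y)) fun y => T1 (f' y) (g' y) :=
  map₂ T1_zero_left eq_of_T1_ne_zero (by simp [T1, isV10]) LeOnP.t1 hf hg

theorem meet (hf : OrderRel f f') (hg : OrderRel g g') :
    OrderRel (fun y => BT.meet (f y) (g y)) fun y => BT.meet (f' y) (g' y) :=
  map₂ meet_zero_left eq_of_meet_ne_zero (fun _ => meet_self one) LeOnP.meet hf hg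

theorem meetI (i : Fin 3) (hf : OrderRel f f') (hg : OrderRel g g') :
    OrderRel (fun y => BT.meetI i (f y) (g y)) fun y => BT.meetI i (f' y) (g' y) :=
  map₂ (meetI_zero_left i) (fun _ => eq_of_meetI_ne_zero) (by simp [BT.meetI, isP, isV10])
    (LeOnP.meetI i) hf hg

theorem jop (hf : OrderRel f f') (hg : OrderRel g g') (hh : OrderRel h h') :
    OrderRel (fun y => J' (f y) (g y) (h y)) fun y => J' (f' y) (g' y) (h' y) := by
  refine ⟨fun x => by rw [hf.eq_on, hg.eq_on, hh.eq_on], fun hz => ?_⟩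
  have hf0 x (e : f (some x) = BT.zero) : False := hz x (by rw [e, J'_zero_left])
  have hg0 x (e : g (some x) = BT.zero) : False := hz x (by rw [e, J'_zero_middle])
  have hfg x := eq_of_J'_ne_zero (hf.isUV hf0 x) (hg.isUV hg0 x) (hz x)
  have hJ x : J' (f (some x)) (g (some x)) (h (some x)) = BT.meet (f (some x)) (h (some x)) := by
    rw [← hfg, J'_self]
  have hfh x := eq_of_meet_ne_zero (hf.isUV hf0 x) ((hJ x).symm.trans_ne (hz x))
  rcases hf.isSeqPair_or_isMachPair hf0 with hs | hm
  · obtain ⟨rfl, rfl⟩ := hs.eq_of_eq_on (hg.isSeqPair fun x => hfg x ▸ hs.isU _) hfg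
    simp only [J'_self] at hz ⊢
    exact (hf.meet hh).isSeqPair_or_isMachPair hz
  · have hmg := hg.isMachPair fun x => hfg x ▸ hm.isV x
    have hmh := hh.isMachPair fun x => (hfh x).1 ▸ hm.isV x
    refine Or.inr ⟨fun x => ?_, hm.leOnP.jop hmg.leOnP hmh.leOnP⟩
    rw [hJ, (hfh x).2]
    exact hm.isV x

theorem s1 (hf : OrderRel f f') (hg : OrderRel g g') (hh : OrderRel h h')
    (hp : OrderRel p p') :
    OrderRel (fun y => S1 (f y) (g y) (h y) (p y)) fun y => S1 (f' y) (g' y) (h' y) (p' y) := by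
  refine ⟨fun x => by rw [hf.eq_on, hg.eq_on, hh.eq_on, hp.eq_on], fun hz => ?_⟩
  have hg0 x (e : g (some x) = BT.zero) : False := hz x (by rw [e, S1_zero])
  have hf12 x := eq_one_or_eq_two_of_S1_ne_zero (hg.isUV hg0 x) (hz x)
  obtain ⟨n, rfl, -⟩ := hf.isSeqPair fun x => by rcases hf12 x with e | e <;> rw [e] <;> rfl
  simpa [aEl_self] using hf12 n

theorem s2 (hf : OrderRel f f') (hg : OrderRel g g') (hh : OrderRel h h')
    (hp : OrderRel p p') (hq : OrderRel q q') :
    OrderRel (fun y => S2 (f y) (g y) (h y) (p y) (q y))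
      fun y => S2 (f' y) (g' y) (h' y) (p' y) (q' y) := by
  refine ⟨fun x => by rw [hf.eq_on, hg.eq_on, hh.eq_on, hp.eq_on, hq.eq_on], fun hz => ?_⟩
  have hh0 x (e : h (some x) = BT.zero) : False := hz x (by rw [e, S2_zero])
  have hbar x := eq_barOp_of_S2_ne_zero (hh.isUV hh0 x) (hz x)
  have hg0 x (e : g (some x) = BT.zero) : False := by simpa [e, isVV] using (hbar x).1
  have hf0 x (e : f (some x) = BT.zero) : False := by
    obtain ⟨hV, hfg⟩ := hbar x
    cases e' : g (some x) <;> simp_all [isVV, barOp]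
  exact absurd (hbar (origin T m)).2
    (ne_barOp_of_isUV (hf.isUV hf0 _) (hg.isUV hg0 _) (hbar (origin T m)).1)

theorem mach (i : Fin (k + 1)) (r t b : Bool) (hf : OrderRel f f') (hg : OrderRel g g')
    (hh : OrderRel h h') :
    OrderRel (fun y => mop T i r t b (f y) (g y) (h y))
      fun y => mop T i r t b (f' y) (g' y) (h' y) := by
  refine ⟨fun x => by rw [hf.eq_on, hg.eq_on, hh.eq_on], fun hz => Or.inr ?_⟩
  have hfg x := isU_of_prec (prec_of_mop_ne_zero (hz x))
  obtain ⟨n, rfl, rfl⟩ := hf.isSeqPair fun x => (hfg x).1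
  obtain ⟨n', rfl, rfl⟩ := hg.isSeqPair fun x => (hfg x).2
  have hm : IsMachPair h h' := by
    have hh0 x (e : h (some x) = BT.zero) : False := hz x (by rw [e, mop_zero])
    refine (hh.isSeqPair_or_isMachPair hh0).resolve_left fun hs => ?_
    simpa [isU_eq_false_of_mop_ne_zero (hz (origin T m))] using hs.isU (some (origin T m))
  exact ⟨fun x => (isV_mop (hz x)).trans (hm.isV x), hm.leOnP.mop_one_one⟩

theorem u1 (i : Fin (k + 1)) (r t b : Bool) (hf : OrderRel f f') (hg : OrderRel g g')
    (hh : OrderRel h h') (hp : OrderRel p p') :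
    OrderRel (fun y => U1op (mop T i r t b) (f y) (g y) (h y) (p y))
      fun y => U1op (mop T i r t b) (f' y) (g' y) (h' y) (p' y) := by
  refine ⟨fun x => by rw [hf.eq_on, hg.eq_on, hh.eq_on, hp.eq_on], fun hz => ?_⟩
  have hfg x := (prec_of_U1op_ne_zero (hz x)).1
  have hfh x := (prec_of_U1op_ne_zero (hz x)).2
  have hsf := hf.isSeqPair fun x => (isU_of_prec (hfg x)).1
  have hsg := hg.isSeqPair fun x => (isU_of_prec (hfg x)).2
  have hsh := hh.isSeqPair fun x => (isU_of_prec (hfh x)).2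
  obtain ⟨rfl, rfl⟩ := hsf.eq_of_prec hsg hsh hfg hfh
  have hprec := hsf.prec_apply hsg hfg
  simp only [U1op_self (hprec _).1, U1op_self (hprec _).2] at hz ⊢
  exact (hf.mach i r t b hg hp).isSeqPair_or_isMachPair hz

theorem u2 (i : Fin (k + 1)) (r t b : Bool) (hf : OrderRel f f') (hg : OrderRel g g')
    (hh : OrderRel h h') (hp : OrderRel p p') :
    OrderRel (fun y => U2op (mop T i r t b) (f y) (g y) (h y) (p y))
      fun y => U2op (mop T i r t b) (f' y) (g' y) (h' y) (p' y) := by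
  refine ⟨fun x => by rw [hf.eq_on, hg.eq_on, hh.eq_on, hp.eq_on], fun hz => ?_⟩
  have hfh x := (prec_of_U2op_ne_zero (hz x)).1
  have hgh x := (prec_of_U2op_ne_zero (hz x)).2
  have hsf := hf.isSeqPair fun x => (isU_of_prec (hfh x)).1
  have hsg := hg.isSeqPair fun x => (isU_of_prec (hgh x)).1
  have hsh := hh.isSeqPair fun x => (isU_of_prec (hfh x)).2
  obtain ⟨rfl, rfl⟩ := hsf.eq_of_prec_right hsg hsh hfh hgh
  have hprec := hsf.prec_apply hsh hfh
  simp only [U2op_self (hprec _).1, U2op_self (hprec _).2] at hz ⊢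
  exact (hf.mach i r t b hh hp).isSeqPair_or_isMachPair hz

end OrderRel

theorem InK.orderRel {c : AA T m} (hc : InK T m c) : OrderRel c c := by
  induction hc with
  | gen_a n hn => exact .aEl ⟨n, hn⟩
  | gen_q j => exact .qEl (Or.inl rfl)
  | zeroOp => exact .zero
  | t0 _ h₁ => exact h₁.t0
  | t1 _ _ h₁ h₂ => exact h₁.t1 h₂
  | meet _ _ h₁ h₂ => exact h₁.meet h₂
  | meetI j _ _ h₁ h₂ => exact h₁.meetI j h₂
  | jop _ _ _ h₁ h₂ h₃ => exact h₁.jop h₂ h₃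
  | s1 _ _ _ _ h₁ h₂ h₃ h₄ => exact h₁.s1 h₂ h₃ h₄
  | s2 _ _ _ _ _ h₁ h₂ h₃ h₄ h₅ => exact h₁.s2 h₂ h₃ h₄ h₅
  | mach i _ r t b _ _ _ h₁ h₂ h₃ => exact h₁.mach i r t b h₂ h₃
  | u1 i _ r t b _ _ _ _ h₁ h₂ h₃ h₄ => exact h₁.u1 i r t b h₂ h₃ h₄
  | u2 i _ r t b _ _ _ _ h₁ h₂ h₃ h₄ => exact h₁.u2 i r t b h₂ h₃ h₄

theorem PolyK.orderRel {n : ℕ} {F : (Fin n → AA T m) → AA T m} (hF : PolyK T m F)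
    {v w : Fin n → AA T m} (hvw : ∀ i, OrderRel (v i) (w i)) : OrderRel (F v) (F w) := by
  induction hF with
  | proj i => exact hvw i
  | const c hc => exact hc.orderRel
  | zeroOp => exact .zero
  | t0 _ h₁ => exact (h₁ hvw).t0
  | t1 _ _ h₁ h₂ => exact (h₁ hvw).t1 (h₂ hvw)
  | meet _ _ h₁ h₂ => exact (h₁ hvw).meet (h₂ hvw)
  | meetI j _ _ h₁ h₂ => exact (h₁ hvw).meetI j (h₂ hvw)
  | jop _ _ _ h₁ h₂ h₃ => exact (h₁ hvw).jop (h₂ hvw) (h₃ hvw)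
  | s1 _ _ _ _ h₁ h₂ h₃ h₄ => exact (h₁ hvw).s1 (h₂ hvw) (h₃ hvw) (h₄ hvw)
  | s2 _ _ _ _ _ h₁ h₂ h₃ h₄ h₅ =>
    exact (h₁ hvw).s2 (h₂ hvw) (h₃ hvw) (h₄ hvw) (h₅ hvw)
  | mach i _ r t b _ _ _ h₁ h₂ h₃ => exact (h₁ hvw).mach i r t b (h₂ hvw) (h₃ hvw)
  | u1 i _ r t b _ _ _ _ h₁ h₂ h₃ h₄ =>
    exact (h₁ hvw).u1 i r t b (h₂ hvw) (h₃ hvw) (h₄ hvw)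
  | u2 i _ r t b _ _ _ _ h₁ h₂ h₃ h₄ =>
    exact (h₁ hvw).u2 i r t b (h₂ hvw) (h₃ hvw) (h₄ hvw)

end OrderRelation

theorem qEl_ne_zero {k : ℕ} (T : TM k) (m : ℕ) (j : Fin 3) (y) : qEl T m j y ≠ BT.zero := by
  rcases y with _ | x
  · simp [qEl]
  · simp only [qEl]
    split_ifs <;> simp

theorem statement15_general {k : ℕ} (T : TM k) (m : ℕ) {F : AA T m → AA T m}
    (hF : UPolyK T m F) {j₁ j₂ : Fin 3} (hle : ∀ y, BT.le (qEl T m j₁ y) (qEl T m j₂ y))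
    (h0 : ∀ y, F (qEl T m j₂) y ≠ BT.zero) (y) :
    BT.le (F (qEl T m j₁) y) (F (qEl T m j₂) y) := by
  have hq : OrderRel (qEl T m j₁) (qEl T m j₂) := .qEl (BT.le_P_iff.1 (hle none))
  have hFq : OrderRel (F (qEl T m j₁)) (F (qEl T m j₂)) :=
    PolyK.orderRel (v := fun _ => qEl T m j₁) (w := fun _ => qEl T m j₂) hF fun _ => hq
  exact hFq.le h0 y

/-- Lemma 4.2(4): every unary polynomial of K mapping {q⁰,q¹,q²} into
itself is order-preserving there for the componentwise order. -/
theorem statement15 {k : ℕ} (hk : 0 < k) (T : TM k) (m : ℕ)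
    (hm : ((cfgStep T)^[m] (Q0 k)).state = 0) :
    ∀ F : AA T m → AA T m, UPolyK T m F →
      (∀ j : Fin 3, ∃ j' : Fin 3, F (qEl T m j) = qEl T m j') →
      ∀ j₁ j₂ : Fin 3,
        (∀ y, BT.le (qEl T m j₁ y) (qEl T m j₂ y)) →
        (∀ y, BT.le (F (qEl T m j₁) y) (F (qEl T m j₂) y)) := by
  intro F hF hq j₁ j₂ hle
  obtain ⟨j, hj⟩ := hq j₂
  exact statement15_general T m hF hle (hj ▸ qEl_ne_zero T m j)

end Paper
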